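/- Let (p, F) be a generating pair and let θ be an infinite string over [N] such that the union of all tiles of T(θ) is ℝ². Then T(θ) is quasiperiodic in the following sense: for every k ≥ 1 there exists R > 0 such that for every point x ∈ ℝ² there is a bijective isometry g of ℝ² with g(t) ∈ T(θ) and g(t) ⊆ closedBall(x, R) for every tile t ∈ T(θ, k). -/

import Mathlib

/-! The patch `T(θ,k)` is `f_{-(θ|k)}` applied to `{f_ρ(p) : ρ ∈ S_n}`, `n = e(θ|k)`, so up to
isometry it depends on `n` only. For `m = e(θ|l)` and any string `τ` with `e(τ) + n = m`, the
strings `τρ` with `ρ ∈ S_n` lie in `S_m`; hence `f_{-(θ|l)} ∘ f_τ` carries `{f_ρ(p)}` to an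
isometric copy of `T(θ,k)` inside `T(θ,l)`.

To find such a copy near `x`: since the patches increase with `l` (`patch_mono`) and cover the plane,
`x` lies in a tile `f_{-(θ|l)} f_σ (p)` with `l` as large as desired. As the `a_i` have gcd `1`,
there is `K` such that every integer `≥ K` is `e(β)` for some string `β` (`exists_estr_eq`). Let `α`
be the longest prefix of `σ` with `e(α) ≤ m - n - K` (`exists_prefix`), choose `β` with
`e(αβ) = m - n` and put `τ = αβ`. Both `x` and the copy lie in `f_{-(θ|l)} f_α (p)`, whose
diameter is at most `s^{-(n + K + A)} diam p` with `A ≥ max a_i`, independently of `x`. -/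

open Set

noncomputable section

abbrev Pt := EuclideanSpace ℝ (Fin 2)

/-- A similitude of the plane with scaling ratio `r`. -/
def IsSimilitude (f : Pt → Pt) (r : ℝ) : Prop :=
  Function.Bijective f ∧ ∀ x y, dist (f x) (f y) = r * dist x y

/-- `e(σ) = a_{σ₁} + ⋯ + a_{σ_k}` for a finite string `σ` over `[N]`. -/
def estr {N : ℕ} (a : Fin N → ℕ) (σ : List (Fin N)) : ℕ := (σ.map a).sum

/-- `e⁻(σ) = e(σ) - a_{σ_k}` (the sum over all but the last letter). -/
def eminus {N : ℕ} (a : Fin N → ℕ) (σ : List (Fin N)) : ℕ := estr a σ.dropLast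

/-- `f_σ = f_{σ₁} ∘ f_{σ₂} ∘ ⋯ ∘ f_{σ_k}`. -/
def fstr {N : ℕ} (f : Fin N → Pt → Pt) (σ : List (Fin N)) : Pt → Pt :=
  σ.foldr (fun i g => f i ∘ g) id

/-- `f_{-σ} = f_{σ₁}⁻¹ ∘ f_{σ₂}⁻¹ ∘ ⋯ ∘ f_{σ_k}⁻¹`. -/
def fneg {N : ℕ} (f : Fin N → Pt → Pt) (σ : List (Fin N)) : Pt → Pt :=
  σ.foldr (fun i g => Function.invFun (f i) ∘ g) id

/-- `S_n` = nonempty finite strings `σ` with `e(σ) ≥ n > e⁻(σ)`. -/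
def Sset {N : ℕ} (a : Fin N → ℕ) (n : ℕ) : Set (List (Fin N)) :=
  {σ | σ ≠ [] ∧ n ≤ estr a σ ∧ eminus a σ < n}

/-- `θ|k = θ₁θ₂⋯θ_k` (we index infinite strings from 0, so `θ|k = θ 0, …, θ (k-1)`). -/
def trunc {N : ℕ} (θ : ℕ → Fin N) (k : ℕ) : List (Fin N) :=
  (List.range k).map θ

/-- The tile `t(θ,k,σ) = (f_{-(θ|k)} ∘ f_σ)(p)`. -/
def tile {N : ℕ} (f : Fin N → Pt → Pt) (p : Set Pt) (θ : ℕ → Fin N) (k : ℕ)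
    (σ : List (Fin N)) : Set Pt :=
  (fneg f (trunc θ k) ∘ fstr f σ) '' p

/-- The patch `T(θ,k) = { t(θ,k,σ) : σ ∈ S_{e(θ|k)} }`. -/
def patch {N : ℕ} (a : Fin N → ℕ) (f : Fin N → Pt → Pt) (p : Set Pt) (θ : ℕ → Fin N)
    (k : ℕ) : Set (Set Pt) :=
  tile f p θ k '' Sset a (estr a (trunc θ k))

/-- The tiling `T(θ) = ⋃_{k ≥ 1} T(θ,k)`. -/
def tiling {N : ℕ} (a : Fin N → ℕ) (f : Fin N → Pt → Pt) (p : Set Pt)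
    (θ : ℕ → Fin N) : Set (Set Pt) :=
  ⋃ k ∈ {k : ℕ | 1 ≤ k}, patch a f p θ k

/-- Concatenation of a finite string `α` with an infinite string `θ`. -/
def cat {N : ℕ} (α : List (Fin N)) (θ : ℕ → Fin N) : ℕ → Fin N :=
  fun i => if h : i < α.length then α.get ⟨i, h⟩ else θ (i - α.length)

/-- A generating pair `(p, F)` with data `a₁,…,a_N` and scaling number `s`. -/
structure GenPair (N : ℕ) (a : Fin N → ℕ) (s : ℝ) (p : Set Pt)
    (f : Fin N → Pt → Pt) : Prop where
  two_le : 2 ≤ N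
  a_pos : ∀ n, 0 < a n
  a_gcd : Finset.univ.gcd a = 1
  s_pos : 0 < s
  s_lt_one : s < 1
  s_eq : ∑ n, s ^ (2 * a n) = 1
  p_nonempty : p.Nonempty
  p_compact : IsCompact p
  p_closure : p = closure (interior p)
  sim : ∀ n, IsSimilitude (f n) (s ^ a n)
  cover : p = ⋃ n, f n '' p
  disj : ∀ m n, m ≠ n → interior (f m '' p) ∩ interior (f n '' p) = ∅

section Aux

variable {N : ℕ} {a : Fin N → ℕ} {s : ℝ} {p : Set Pt} {f : Fin N → Pt → Pt}

lemma estr_append (σ τ : List (Fin N)) : estr a (σ ++ τ) = estr a σ + estr a τ := by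
  simp [estr]

lemma estr_cons (i : Fin N) (τ : List (Fin N)) : estr a (i :: τ) = a i + estr a τ := by
  simp [estr]

lemma fstr_append (σ τ : List (Fin N)) : fstr f (σ ++ τ) = fstr f σ ∘ fstr f τ := by
  induction σ with
  | nil => rfl
  | cons i σ ih =>
    change f i ∘ fstr f (σ ++ τ) = (f i ∘ fstr f σ) ∘ fstr f τ
    rw [ih]; rfl

lemma fneg_append (σ τ : List (Fin N)) : fneg f (σ ++ τ) = fneg f σ ∘ fneg f τ := by
  induction σ with
  | nil => rfl
  | cons i σ ih =>
    change Function.invFun (f i) ∘ fneg f (σ ++ τ) =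
      (Function.invFun (f i) ∘ fneg f σ) ∘ fneg f τ
    rw [ih]; rfl

lemma trunc_succ (θ : ℕ → Fin N) (k : ℕ) : trunc θ (k + 1) = trunc θ k ++ [θ k] := by
  simp [trunc, List.range_succ]

/-- Prefixing a string of `S_n` by `τ` gives a string of `S_{e(τ)+n}`. -/
lemma append_mem_Sset (τ ρ : List (Fin N)) {n : ℕ} (h : ρ ∈ Sset a n) :
    τ ++ ρ ∈ Sset a (estr a τ + n) := by
  obtain ⟨h1, h2, h3⟩ := h
  refine ⟨by simp [h1], by rw [estr_append]; omega, ?_⟩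
  unfold eminus at *
  rw [List.dropLast_append_of_ne_nil h1, estr_append]
  omega

lemma IsSimilitude.comp {g h : Pt → Pt} {r q : ℝ} (hg : IsSimilitude g r)
    (hh : IsSimilitude h q) : IsSimilitude (g ∘ h) (r * q) :=
  ⟨hg.1.comp hh.1, fun x y => by simp only [Function.comp]; rw [hg.2, hh.2, mul_assoc]⟩

lemma IsSimilitude.invFun {g : Pt → Pt} {r : ℝ} (hr : 0 < r) (hg : IsSimilitude g r) :
    IsSimilitude (Function.invFun g) r⁻¹ := by
  have hl := Function.leftInverse_invFun hg.1.1
  have hri := Function.rightInverse_invFun hg.1.2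
  refine ⟨⟨hri.injective, hl.surjective⟩, fun x y => ?_⟩
  have := hg.2 (Function.invFun g x) (Function.invFun g y)
  rw [hri x, hri y] at this
  rw [this]; field_simp

lemma sim_fstr (hGP : GenPair N a s p f) (σ : List (Fin N)) :
    IsSimilitude (fstr f σ) (s ^ estr a σ) := by
  induction σ with
  | nil => exact ⟨Function.bijective_id, fun x y => by simp [estr, fstr]⟩
  | cons i σ ih =>
    rw [estr_cons, pow_add]
    exact (hGP.sim i).comp ih

lemma sim_fneg (hGP : GenPair N a s p f) (σ : List (Fin N)) :
    IsSimilitude (fneg f σ) (s ^ estr a σ)⁻¹ := by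
  induction σ with
  | nil => exact ⟨Function.bijective_id, fun x y => by simp [estr, fneg]⟩
  | cons i σ ih =>
    rw [estr_cons, pow_add, mul_inv]
    exact ((hGP.sim i).invFun (pow_pos hGP.s_pos _)).comp ih

lemma fstr_image_subset (hGP : GenPair N a s p f) (σ : List (Fin N)) : fstr f σ '' p ⊆ p := by
  induction σ with
  | nil => simp [fstr]
  | cons i σ ih =>
    change (f i ∘ fstr f σ) '' p ⊆ p
    rw [image_comp]
    refine (image_mono ih).trans ?_
    conv_rhs => rw [hGP.cover]
    exact subset_iUnion (fun n => f n '' p) i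

lemma patch_mono (hGP : GenPair N a s p f) (θ : ℕ → Fin N) : Monotone (patch a f p θ) := by
  refine monotone_nat_of_le_succ fun k => ?_
  rintro _ ⟨σ, hσ, rfl⟩
  refine ⟨[θ k] ++ σ, ?_, ?_⟩
  · have := append_mem_Sset [θ k] σ hσ
    rwa [trunc_succ, estr_append, add_comm]
  · unfold tile
    congr 1
    rw [trunc_succ, fneg_append, fstr_append]
    funext x
    -- `f_{θ_{k+1}}⁻¹` cancels `f_{θ_{k+1}}`
    exact congrArg (fneg f (trunc θ k))
      (Function.leftInverse_invFun (hGP.sim (θ k)).1.1 (fstr f σ x))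

lemma le_estr_trunc (hGP : GenPair N a s p f) (θ : ℕ → Fin N) (k : ℕ) :
    k ≤ estr a (trunc θ k) := by
  induction k with
  | zero => simp
  | succ k ih =>
    rw [trunc_succ, estr_append, estr_cons]
    have := hGP.a_pos (θ k)
    omega

/-- Since the `a_i` have gcd `1`, every sufficiently large integer is the weight of a string. -/
lemma exists_estr_eq (hGP : GenPair N a s p f) :
    ∃ K, ∀ m ≥ K, ∃ β : List (Fin N), estr a β = m := by
  obtain ⟨K, hK⟩ := Nat.exists_mem_closure_of_ge (range a)
  refine ⟨K, fun m hm => ?_⟩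
  have hg : Nat.setGcd (range a) ∣ m := by
    have : Nat.setGcd (range a) ∣ Finset.univ.gcd a :=
      Finset.dvd_gcd fun i _ => Nat.setGcd_dvd_of_mem (mem_range_self i)
    rw [hGP.a_gcd] at this
    exact this.trans (one_dvd m)
  refine AddSubmonoid.closure_induction (motive := fun m _ => ∃ β : List (Fin N), estr a β = m)
    ?_ ⟨[], rfl⟩ ?_ (hK m hm hg)
  · rintro _ ⟨i, rfl⟩
    exact ⟨[i], by simp [estr]⟩
  · rintro _ _ _ _ ⟨β, rfl⟩ ⟨γ, rfl⟩
    exact ⟨β ++ γ, estr_append _ _⟩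

/-- The longest prefix of weight at most `M` has weight more than `M - A`. -/
lemma exists_prefix {A : ℕ} (hA : ∀ i, a i ≤ A) (σ : List (Fin N)) :
    ∀ M, M < estr a σ → ∃ α γ, σ = α ++ γ ∧ estr a α ≤ M ∧ M < estr a α + A := by
  induction σ with
  | nil => intro M h; simp [estr] at h
  | cons i σ ih =>
    intro M h
    by_cases hi : a i ≤ M
    · rw [estr_cons] at h
      obtain ⟨α, γ, rfl, h1, h2⟩ := ih (M - a i) (by omega)
      exact ⟨i :: α, γ, rfl, by rw [estr_cons]; omega, by rw [estr_cons]; omega⟩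
    · have := hA i
      exact ⟨[], i :: σ, rfl, by simp [estr], by simp [estr]; omega⟩

end Aux

/-- if the tiles of `T(θ)` cover the plane, then `T(θ)` is quasiperiodic:
for every `k ≥ 1` there is `R > 0` such that every closed disk of radius `R` contains a
congruent copy (by a bijective isometry `g`) of the patch `T(θ,k)` made up of tiles of
`T(θ)`. -/
theorem stmt_16 (N : ℕ) (a : Fin N → ℕ) (s : ℝ) (p : Set Pt) (f : Fin N → Pt → Pt)
    (hGP : GenPair N a s p f) (θ : ℕ → Fin N)
    (hfull : ⋃₀ tiling a f p θ = Set.univ) :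
    ∀ k : ℕ, 1 ≤ k → ∃ R > 0, ∀ x : Pt, ∃ g : Pt → Pt,
      Function.Bijective g ∧ Isometry g ∧
      ∀ t ∈ patch a f p θ k,
        g '' t ∈ tiling a f p θ ∧ g '' t ⊆ Metric.closedBall x R := by
  intro k hk
  obtain ⟨K, hK⟩ := exists_estr_eq hGP
  have hA : ∀ i, a i ≤ ∑ j, a j := fun i => Finset.single_le_sum (by simp) (Finset.mem_univ i)
  set A := ∑ j, a j
  have hs := hGP.s_pos
  set n := estr a (trunc θ k) with hn
  have hn1 : k ≤ n := le_estr_trunc hGP θ k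
  have hD : 0 ≤ Metric.diam p := Metric.diam_nonneg
  refine ⟨(s ^ (n + K + A))⁻¹ * Metric.diam p + 1, by positivity, fun x => ?_⟩
  obtain ⟨l, hl, σ, hσ, y, hy, hyx⟩ : ∃ l, n + K ≤ l ∧ ∃ σ ∈ Sset a (estr a (trunc θ l)),
      ∃ y ∈ p, fneg f (trunc θ l) (fstr f σ y) = x := by
    have hx : x ∈ ⋃₀ tiling a f p θ := hfull ▸ mem_univ x
    obtain ⟨t, ht, hxt⟩ := hx
    simp only [tiling, mem_iUnion] at ht
    obtain ⟨l, _, ht⟩ := ht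
    obtain ⟨σ, hσ, rfl⟩ := patch_mono hGP θ (le_max_left l (n + K)) ht
    obtain ⟨y, hy, hyx⟩ := hxt
    exact ⟨_, le_max_right _ _, σ, hσ, y, hy, hyx⟩
  have hml := le_estr_trunc hGP θ l
  set m := estr a (trunc θ l) with hm
  obtain ⟨α, γ, rfl, hα1, hα2⟩ := exists_prefix hA σ (m - n - K) (by have := hσ.2.1; omega)
  obtain ⟨β, hβ⟩ := hK (m - n - estr a α) (by omega)
  have hτ : estr a (α ++ β) + n = m := by rw [estr_append]; omega
  have hk' := sim_fneg hGP (trunc θ k)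
  have hpos : 0 < (s ^ n)⁻¹ := by positivity
  have hg := ((sim_fneg hGP (trunc θ l)).comp (sim_fstr hGP (α ++ β))).comp (hk'.invFun hpos)
  have hcancel := Function.leftInverse_invFun hk'.1.1
  rw [← hm, inv_inv, mul_assoc, ← pow_add, hτ, inv_mul_cancel₀ (by positivity)] at hg
  refine ⟨_, hg.1, Isometry.of_dist_eq fun u v => by rw [hg.2, one_mul], ?_⟩
  rintro _ ⟨ρ, hρ, rfl⟩
  have himg : ((fneg f (trunc θ l) ∘ fstr f (α ++ β)) ∘ Function.invFun (fneg f (trunc θ k))) ''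
      tile f p θ k ρ = tile f p θ l ((α ++ β) ++ ρ) := by
    unfold tile
    rw [← image_comp, fstr_append _ ρ]
    congr 1
    funext u
    exact congrArg (fun v => fneg f (trunc θ l) (fstr f (α ++ β) v)) (hcancel (fstr f ρ u))
  rw [himg]
  refine ⟨?_, ?_⟩
  · simp only [tiling, mem_iUnion]
    refine ⟨l, show 1 ≤ l by omega, _, ?_, rfl⟩
    have := append_mem_Sset (α ++ β) ρ hρ
    rwa [← hn, hτ] at this
  · rintro _ ⟨u, hu, rfl⟩
    have hs' := (sim_fneg hGP (trunc θ l)).comp (sim_fstr hGP α)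
    -- both points lie in `f_{-(θ|l)} f_α (p)`
    have hu' : fstr f (β ++ ρ) u ∈ p := fstr_image_subset hGP _ (mem_image_of_mem _ hu)
    have hy' : fstr f γ y ∈ p := fstr_image_subset hGP _ (mem_image_of_mem _ hy)
    have hd := hs'.2 (fstr f (β ++ ρ) u) (fstr f γ y)
    rw [Metric.mem_closedBall, ← hyx, List.append_assoc, fstr_append α, fstr_append α]
    simp only [Function.comp] at hd ⊢
    rw [hd]
    have hdist := Metric.dist_le_diam_of_mem hGP.p_compact.isBounded hu' hy'
    have hr : (s ^ m)⁻¹ * s ^ estr a α ≤ (s ^ (n + K + A))⁻¹ := by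
      rw [inv_mul_le_iff₀ (by positivity), ← div_eq_mul_inv, le_div_iff₀ (by positivity),
        ← pow_add]
      exact pow_le_pow_of_le_one hs.le hGP.s_lt_one.le (by omega)
    have := mul_le_mul hr hdist dist_nonneg (by positivity)
    linarith
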